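/- Let m ∈ ℕ and for each i ∈ {1,…,m} let A_i be a u_i×v_i image partition regular matrix with u_i, v_i ∈ ℕ. Let ℱ be the set of all finite image partition regular matrices with rational entries, let I = ⋂_{A ∈ ℱ} I(A), let p ∈ I, and let U ∈ p^m, where p^m denotes the m-fold product p·p·…·p in (βℕ,·). Then there exist x^(i) ∈ ℕ^{v_i} for 1 ≤ i ≤ m such that P(A_1x^(1), A_2x^(2), …, A_mx^(m)) ⊆ U. -/

import Mathlib

/- `ℕ+` plays the role of the paper's `ℕ = {1,2,3,…}`.  `Ultrafilter ℕ+` is `βℕ`. -/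

/-- Product of ultrafilters: `U ∈ umul p q ↔ {x | {y | x*y ∈ U} ∈ q} ∈ p`. -/
def umul (p q : Ultrafilter ℕ+) : Ultrafilter ℕ+ :=
  p.bind fun x => q.map fun y => x * y

/-- Sum of ultrafilters: `U ∈ uadd p q ↔ {x | {y | x+y ∈ U} ∈ q} ∈ p`. -/
def uadd (p q : Ultrafilter ℕ+) : Ultrafilter ℕ+ :=
  p.bind fun x => q.map fun y => x + y

/-- The matrix-vector product `Ax` (computed in `ℚ`) of a row-finite matrix `A`
with a vector `x` of positive integers. -/
noncomputable def mulVecQ {ι κ : Type} (A : ι → κ → ℚ) (x : κ → ℕ+) : ι → ℚ :=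
  fun i => ∑ᶠ j, A i j * ((x j : ℕ) : ℚ)

/-- All entries of the vector `y` are (positive) natural numbers lying in `P`. -/
def entriesIn {ι : Type} (y : ι → ℚ) (P : Set ℕ+) : Prop :=
  ∀ i, ∃ n ∈ P, y i = ((n : ℕ) : ℚ)

/-- `A` is image partition regular: for every finite coloring of `ℕ` there is
a vector `x` over `ℕ` all entries of whose image `Ax` are monochromatic. -/
def IPR {ι κ : Type} (A : ι → κ → ℚ) : Prop :=
  ∀ (r : ℕ) (c : ℕ+ → Fin r), ∃ (k : Fin r) (x : κ → ℕ+),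
    entriesIn (mulVecQ A x) {n | c n = k}

/-- `I(A) = {p ∈ βℕ : for every P ∈ p there is x over ℕ with all entries of Ax in P}`. -/
def ISet {ι κ : Type} (A : ι → κ → ℚ) : Set (Ultrafilter ℕ+) :=
  {p | ∀ P ∈ p, ∃ x : κ → ℕ+, entriesIn (mulVecQ A x) P}

/-- `upow p m` is the `m`-fold product `p·p·…·p` in `(βℕ,·)` (for `m ≥ 1`). -/
def upow (p : Ultrafilter ℕ+) : ℕ → Ultrafilter ℕ+
  | 0 => p
  | 1 => p
  | n + 2 => umul (upow p (n + 1)) p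

/-!
The factors are handled one at a time.  If `a * b ∈ U` for `p`-most `a` and `q`-most `b`, put the
entries of the first pattern into `{a | ∀ᶠ b in q, a * b ∈ U}`.  Since there are finitely many of
them, the set of `b` that work for all of these entries at once is still in `q`, and so it contains
the entries of a second pattern.
-/

section Realizes

variable {M ι κ : Type*}

/-- `F`, a collection of patterns `ι → M`, is realized in the ultrafilter `p`: every member of `p`
contains all the entries of some pattern in `F`.  This abstracts `p ∈ I(A)`, where `F` consists of
the image vectors of `A`. -/
def Realizes (p : Ultrafilter M) (F : Set (ι → M)) : Prop :=
  ∀ P ∈ p, ∃ y ∈ F, ∀ i, y i ∈ P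

attribute [local instance] Ultrafilter.mul

theorem Realizes.mul [Mul M] [Finite ι] {p q : Ultrafilter M} {F : Set (ι → M)}
    {G : Set (κ → M)} (hF : Realizes p F) (hG : Realizes q G) :
    Realizes (p * q) (Set.image2 (fun y z (ij : ι × κ) => y ij.1 * z ij.2) F G) := by
  intro U hU
  obtain ⟨y, hyF, hy⟩ := hF {a | ∀ᶠ b in q, a * b ∈ U} ((Ultrafilter.eventually_mul p q _).1 hU)
  obtain ⟨z, hzG, hz⟩ := hG {b | ∀ i, y i * b ∈ U} (Filter.eventually_all.2 hy)
  exact ⟨_, Set.mem_image2_of_mem hyF hzG, fun ij => hz ij.2 ij.1⟩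

theorem upow_add_two (p : Ultrafilter ℕ+) (k : ℕ) : upow p (k + 2) = upow p (k + 1) * p := rfl

theorem Realizes.upow_succ {p : Ultrafilter ℕ+} {k : ℕ} {β : Fin (k + 1) → Type*}
    [∀ i, Finite (β i)] {F : ∀ i, Set (β i → ℕ+)} (hF : ∀ i, Realizes p (F i)) :
    Realizes (upow p (k + 1))
      ((fun y (f : ∀ i, β i) => ∏ i, y i (f i)) '' Set.univ.pi F) := by
  induction k with
  | zero =>
    intro U hU
    obtain ⟨y, hyF, hy⟩ := hF 0 U hU
    refine ⟨_, ⟨Fin.cons y finZeroElim, fun i _ => ?_, rfl⟩, fun f => ?_⟩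
    · obtain rfl := Fin.fin_one_eq_zero i
      exact hyF
    · simpa using hy (f 0)
  | succ k ih =>
    rw [upow_add_two]
    intro U hU
    obtain ⟨_, ⟨_, ⟨y, hyF, rfl⟩, z, hzF, rfl⟩, hyz⟩ :=
      (ih fun i => hF i.castSucc).mul (hF (Fin.last _)) U hU
    refine ⟨_, ⟨Fin.snoc (α := fun i => β i → ℕ+) y z, fun i _ => ?_, rfl⟩, fun f => ?_⟩
    · cases i using Fin.lastCases with
      | last => simpa only [Fin.snoc_last] using hzF
      | cast i => simpa only [Fin.snoc_castSucc] using hyF i trivial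
    · simpa only [Fin.prod_univ_castSucc, Fin.snoc_castSucc, Fin.snoc_last] using
        hyz (fun i => f i.castSucc, f (Fin.last _))

end Realizes

theorem mem_ISet_iff_realizes {ι κ : Type} {A : ι → κ → ℚ} {p : Ultrafilter ℕ+} :
    p ∈ ISet A ↔
      Realizes p {y : ι → ℕ+ | ∃ x : κ → ℕ+, ∀ i, mulVecQ A x i = ((y i : ℕ) : ℚ)} := by
  refine forall₂_congr fun P _ => ⟨fun ⟨x, hx⟩ => ?_, fun ⟨y, ⟨x, hx⟩, hy⟩ => ?_⟩
  · choose y hyP hxy using hx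
    exact ⟨y, ⟨x, hxy⟩, hyP⟩
  · exact ⟨x, fun i => ⟨y i, hy i, hx i⟩⟩

theorem stmt_13_general {m : ℕ} (hm : 0 < m) {ι κ : Fin m → Type} [∀ i, Finite (ι i)]
    (A : ∀ i, ι i → κ i → ℚ) {p : Ultrafilter ℕ+} (hp : ∀ i, p ∈ ISet (A i))
    {U : Set ℕ+} (hU : U ∈ upow p m) :
    ∃ x : ∀ i, κ i → ℕ+,
      ∀ f : ∀ i, ι i, ∃ n ∈ U, (∏ i, mulVecQ (A i) (x i) (f i)) = ((n : ℕ) : ℚ) := by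
  obtain ⟨k, rfl⟩ := Nat.exists_eq_add_one.2 hm
  obtain ⟨_, ⟨y, hy, rfl⟩, hyU⟩ :=
    Realizes.upow_succ (fun i => mem_ISet_iff_realizes.1 (hp i)) U hU
  choose x hx using fun i => hy i trivial
  refine ⟨x, fun f => ⟨∏ i, y i (f i), hyU f, ?_⟩⟩
  simp only [hx, Finset.PNat.coe_prod, Nat.cast_prod]

/-- Lemma 3.11: let `A 0, …, A (m-1)` be finite image partition
regular matrices, let `p ∈ I = ⋂_{A ∈ ℱ} I(A)` (`ℱ` the class of all finite image
partition regular matrices) and let `U ∈ p^m`.  Then there are vectors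
`x i ∈ ℕ^{v i}` such that `P(A 0 (x 0), …, A (m-1) (x (m-1))) ⊆ U`, i.e. every
product of one entry from each image `A i (x i)` is an element of `U`. -/
theorem stmt_13 (m : ℕ) (hm : 0 < m) (u v : Fin m → ℕ)
    (A : ∀ i, Fin (u i) → Fin (v i) → ℚ) (hA : ∀ i, IPR (A i))
    (p : Ultrafilter ℕ+)
    (hp : ∀ (u' v' : ℕ) (B : Fin u' → Fin v' → ℚ), IPR B → p ∈ ISet B)
    (U : Set ℕ+) (hU : U ∈ upow p m) :
    ∃ x : ∀ i, Fin (v i) → ℕ+,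
      ∀ f : ∀ i, Fin (u i), ∃ n ∈ U,
        (∏ i, mulVecQ (A i) (x i) (f i)) = ((n : ℕ) : ℚ) :=
  stmt_13_general hm A (fun i => hp _ _ (A i) (hA i)) hU
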